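/- Let K be an infinite field and S = K[x_1,...,x_n]. Let I ⊆ S be a Borel-fixed ideal and J ⊆ S a homogeneous ideal satisfying h(J) = J for every lower triangular invertible matrix h ∈ GL_n(K). Then for a general change of coordinates g ∈ GL_n(K), one has H(I ∩ g(J), d) = H(I ∩ J, d) and H(I·g(J), d) = H(I·J, d) for all d ≥ 0. -/

import Mathlib

/-!
If all trailing principal minors of `g` are nonzero, then `g * l = b` for some lower triangular `l`
and upper triangular `b` in `GL_n(K)`. Since `l` fixes `J` and `b` fixes `I`, both `I ∩ g(J)` and
`I · g(J)` are obtained from `I ∩ J` and `I · J` by the change of coordinates `b`, which preserves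
dimensions in each degree.
-/

open MvPolynomial TensorProduct CategoryTheory

noncomputable section

/-- The polynomial ring `S = K[x_1,...,x_n]`, standard graded. -/
abbrev PS (K : Type) [Field K] (n : ℕ) : Type := MvPolynomial (Fin n) K

variable (K : Type) [Field K] (n : ℕ)

/-- An ideal of `S` is homogeneous if it contains all homogeneous components of its
elements. -/
def IsHomog (I : Ideal (PS K n)) : Prop :=
  ∀ f ∈ I, ∀ d : ℕ, MvPolynomial.homogeneousComponent d f ∈ I

/-- The change of coordinates of `S` induced by `g ∈ GL_n(K)`, determined by
`g(x_i) = ∑_j g_{ji} x_j`. -/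
def coordChange (g : GL (Fin n) K) : PS K n →ₐ[K] PS K n :=
  MvPolynomial.aeval (fun i => ∑ j, ((g : Matrix (Fin n) (Fin n) K) j i) • MvPolynomial.X j)

/-- A property `P` holds for a general change of coordinates `g ∈ GL_n(K)` if there is a
nonempty Zariski open subset `U ⊆ GL_n(K)` on which it holds; equivalently (as `GL_n(K)` is
an irreducible variety over the infinite field `K`) there is a nonzero polynomial `F` in the
matrix entries such that `P g` holds whenever `F` does not vanish at `g`. -/
def generally (P : GL (Fin n) K → Prop) : Prop :=
  ∃ F : MvPolynomial (Fin n × Fin n) K, F ≠ 0 ∧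
    ∀ g : GL (Fin n) K,
      MvPolynomial.eval (fun p => (g : Matrix (Fin n) (Fin n) K) p.1 p.2) F ≠ 0 → P g

/-- The Hilbert function: `H(I,d) = dim_K I_d`. -/
def hilb (I : Ideal (PS K n)) (d : ℕ) : ℕ :=
  Module.finrank K ↥(Submodule.restrictScalars K I ⊓ homogeneousSubmodule (Fin n) K d)

/-- `I` is Borel-fixed: `b(I) = I` for every upper triangular invertible matrix `b`. -/
def IsBorelFixed (I : Ideal (PS K n)) : Prop :=
  ∀ b : GL (Fin n) K, (∀ i j : Fin n, j < i → (b : Matrix (Fin n) (Fin n) K) i j = 0) →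
    Ideal.map (coordChange K n b) I = I

/-- The coordinate reversal `op : x_i ↦ x_{n-i+1}`. -/
def opMap : PS K n →ₐ[K] PS K n :=
  MvPolynomial.aeval (fun i => MvPolynomial.X i.rev)

section TriangularFactorization

variable {ι R S : Type*} [Fintype ι] [CommRing R] [CommRing S]

lemma exists_mulVec_eq_on_of_isUnit_det_toSquareBlockProp [DecidableEq ι] (A : Matrix ι ι R)
    (p : ι → Prop) [DecidablePred p] (hA : IsUnit (A.toSquareBlockProp p).det) (w : ι → R) :
    ∃ v : ι → R, (∀ j, ¬ p j → v j = 0) ∧ ∀ k, p k → (A.mulVec v) k = w k := by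
  let u : {j // p j} → R := (A.toSquareBlockProp p)⁻¹.mulVec (w ∘ Subtype.val)
  have hu : (A.toSquareBlockProp p).mulVec u = w ∘ Subtype.val := by
    rw [Matrix.mulVec_mulVec, Matrix.mul_nonsing_inv _ hA, Matrix.one_mulVec]
  let v : ι → R := fun j => if h : p j then u ⟨j, h⟩ else 0
  have hv (j : ι) (hj : ¬ p j) : v j = 0 := dif_neg hj
  refine ⟨v, hv, fun k hk => ?_⟩
  have h_on : ∑ j : {j // p j}, A k j * v j = w k := by
    simp only [v, Subtype.prop, dif_pos]
    exact congrFun hu ⟨k, hk⟩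
  have h_off : ∑ j : {j // ¬ p j}, A k j * v j = 0 :=
    Finset.sum_eq_zero fun j _ => by rw [hv j j.2, mul_zero]
  rw [Matrix.mulVec, dotProduct, ← Fintype.sum_subtype_add_sum_subtype p, h_on, h_off, add_zero]

variable [LinearOrder ι]

/-- The product of the trailing principal minors of `A`, that is, of the minors on the rows and
columns `≥ i`. Its nonvanishing is the open condition defining a general change of coordinates. -/
def trailingMinorProd (A : Matrix ι ι R) : R :=
  ∏ i, (A.toSquareBlockProp (i ≤ ·)).det

lemma trailingMinorProd_one : trailingMinorProd (1 : Matrix ι ι R) = 1 :=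
  Finset.prod_eq_one fun i _ => by
    rw [Matrix.toSquareBlockProp, Matrix.toBlock_one_self, Matrix.det_one]

lemma map_trailingMinorProd (f : R →+* S) (A : Matrix ι ι R) :
    f (trailingMinorProd A) = trailingMinorProd (f.mapMatrix A) := by
  simp only [trailingMinorProd, map_prod, RingHom.map_det]
  rfl

lemma eval_trailingMinorProd_mvPolynomialX (A : Matrix ι ι R) :
    eval (fun p => A p.1 p.2) (trailingMinorProd (Matrix.mvPolynomialX ι ι R)) =
      trailingMinorProd A := by
  rw [map_trailingMinorProd, Matrix.mvPolynomialX_mapMatrix_eval]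

lemma trailingMinorProd_mvPolynomialX_ne_zero [Nontrivial R] :
    trailingMinorProd (Matrix.mvPolynomialX ι ι R) ≠ 0 := fun h => by
  have h_eval := eval_trailingMinorProd_mvPolynomialX (1 : Matrix ι ι R)
  rw [h, map_zero, trailingMinorProd_one] at h_eval
  exact zero_ne_one h_eval

theorem exists_isLowerTriangular_isUpperTriangular_mul (A : Matrix ι ι R)
    (hA : IsUnit (trailingMinorProd A)) :
    ∃ L : GL ι R, (L : Matrix ι ι R).IsLowerTriangular ∧
      (A * (L : Matrix ι ι R)).IsUpperTriangular := by
  have h_column (i : ι) : ∃ v : ι → R,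
      (∀ j, ¬ i ≤ j → v j = 0) ∧ ∀ k, i ≤ k → (A.mulVec v) k = (Pi.single i 1 : ι → R) k :=
    exists_mulVec_eq_on_of_isUnit_det_toSquareBlockProp A (i ≤ ·)
      (IsUnit.prod_univ_iff.mp hA i) (Pi.single i 1)
  choose v hv_supp hv using h_column
  let L : Matrix ι ι R := Matrix.of fun j i => v i j
  have hAL (k i : ι) (hik : i ≤ k) : (A * L) k i = (Pi.single i 1 : ι → R) k := hv i k hik
  have h_upper : (A * L).IsUpperTriangular := fun k i hik => by
    have hik' : i < k := hik
    rw [hAL k i hik'.le, Pi.single_eq_of_ne hik'.ne']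
  have h_det : A.det * L.det = 1 := by
    rw [← Matrix.det_mul, Matrix.det_of_isUpperTriangular h_upper]
    exact Finset.prod_eq_one fun i _ => by rw [hAL i i le_rfl, Pi.single_eq_same]
  exact ⟨Matrix.GeneralLinearGroup.mk'' L (.of_mul_eq_one_right _ h_det),
    fun j i hji => hv_supp i j (not_le_of_gt hji), h_upper⟩

end TriangularFactorization

lemma map_inf_of_bijective {R S F : Type*} [Semiring R] [Semiring S] [FunLike F R S]
    [RingHomClass F R S] {f : F} (hf : Function.Bijective f) (I J : Ideal R) :
    (I ⊓ J).map f = I.map f ⊓ J.map f :=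
  (Ideal.relIsoOfBijective f hf).symm.map_inf I J

lemma restrictScalars_map_of_surjective {R A B : Type*} [CommSemiring R] [Semiring A] [Semiring B]
    [Algebra R A] [Algebra R B] {f : A →ₐ[R] B} (hf : Function.Surjective f) (I : Ideal A) :
    (I.map f).restrictScalars R = (I.restrictScalars R).map f.toLinearMap :=
  Submodule.ext fun _ => Ideal.mem_map_iff_of_surjective f hf

section CoordChange

variable {K n}

lemma hilb_map_of_bijective {f : PS K n →ₐ[K] PS K n} (hf : Function.Bijective f) {d : ℕ}
    (hfd : (homogeneousSubmodule (Fin n) K d).map f.toLinearMap = homogeneousSubmodule (Fin n) K d)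
    (I : Ideal (PS K n)) : hilb K n (I.map f) d = hilb K n I d := by
  have h_map : (I.map f).restrictScalars K ⊓ homogeneousSubmodule (Fin n) K d =
      (I.restrictScalars K ⊓ homogeneousSubmodule (Fin n) K d).map f.toLinearMap := by
    rw [Submodule.map_inf _ hf.injective, hfd, restrictScalars_map_of_surjective hf.surjective]
  rw [hilb, h_map]
  exact (Submodule.equivMapOfInjective _ hf.injective _).finrank_eq.symm

lemma coordChange_one : coordChange K n 1 = AlgHom.id K (PS K n) :=
  algHom_ext fun i => by simp [coordChange, Matrix.one_apply]

lemma coordChange_mul (g h : GL (Fin n) K) :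
    coordChange K n (g * h) = (coordChange K n g).comp (coordChange K n h) := by
  ext1 i
  simp only [coordChange, aeval_X, AlgHom.comp_apply, map_sum, map_smul, Units.val_mul,
    Matrix.mul_apply, Finset.sum_smul, Finset.smul_sum, smul_smul]
  rw [Finset.sum_comm]
  simp only [mul_comm]

lemma coordChange_coordChange_inv (g : GL (Fin n) K) (f : PS K n) :
    coordChange K n g (coordChange K n g⁻¹ f) = f := by
  rw [← AlgHom.comp_apply, ← coordChange_mul, mul_inv_cancel, coordChange_one, AlgHom.id_apply]

lemma coordChange_bijective (g : GL (Fin n) K) : Function.Bijective (coordChange K n g) :=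
  Function.bijective_iff_has_inverse.mpr ⟨coordChange K n g⁻¹,
    fun f => by simpa only [inv_inv] using coordChange_coordChange_inv g⁻¹ f,
    coordChange_coordChange_inv g⟩

lemma map_coordChange_mul (g h : GL (Fin n) K) (I : Ideal (PS K n)) :
    I.map (coordChange K n (g * h)) = (I.map (coordChange K n h)).map (coordChange K n g) := by
  rw [coordChange_mul]
  exact (Ideal.map_map _ _).symm

lemma isHomogeneous_coordChange (g : GL (Fin n) K) {f : PS K n} {d : ℕ} (hf : f.IsHomogeneous d) :
    (coordChange K n g f).IsHomogeneous d := by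
  have h_linear (i : Fin n) :
      (∑ j, (g : Matrix (Fin n) (Fin n) K) j i • (X j : PS K n)).IsHomogeneous 1 :=
    IsHomogeneous.sum _ _ _ fun j _ => by
      simpa only [smul_eq_C_mul] using (isHomogeneous_X K j).C_mul _
  simpa only [coordChange, one_mul] using hf.aeval _ h_linear

lemma homogeneousSubmodule_map_coordChange (g : GL (Fin n) K) (d : ℕ) :
    (homogeneousSubmodule (Fin n) K d).map (coordChange K n g).toLinearMap =
      homogeneousSubmodule (Fin n) K d := by
  refine le_antisymm ?_ fun f hf =>
    ⟨coordChange K n g⁻¹ f, isHomogeneous_coordChange g⁻¹ hf, coordChange_coordChange_inv g f⟩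
  rintro _ ⟨f, hf, rfl⟩
  exact isHomogeneous_coordChange g hf

lemma hilb_map_coordChange (g : GL (Fin n) K) (I : Ideal (PS K n)) (d : ℕ) :
    hilb K n (I.map (coordChange K n g)) d = hilb K n I d :=
  hilb_map_of_bijective (coordChange_bijective g) (homogeneousSubmodule_map_coordChange g d) I

theorem hilb_general_eq_of_borel_fixed_general {I J : Ideal (PS K n)} (hI : IsBorelFixed K n I)
    (hJ : ∀ h : GL (Fin n) K,
      (∀ i j : Fin n, i < j → (h : Matrix (Fin n) (Fin n) K) i j = 0) →
        Ideal.map (coordChange K n h) J = J)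
    {g : GL (Fin n) K} (hg : trailingMinorProd (g : Matrix (Fin n) (Fin n) K) ≠ 0) (d : ℕ) :
    hilb K n (I ⊓ Ideal.map (coordChange K n g) J) d = hilb K n (I ⊓ J) d ∧
      hilb K n (I * Ideal.map (coordChange K n g) J) d = hilb K n (I * J) d := by
  obtain ⟨l, hl, hgl⟩ :=
    exists_isLowerTriangular_isUpperTriangular_mul (g : Matrix (Fin n) (Fin n) K) hg.isUnit
  have h_fix_I : I.map (coordChange K n (g * l)) = I := hI (g * l) fun _ _ hij => hgl hij
  have h_map_J : J.map (coordChange K n (g * l)) = J.map (coordChange K n g) := by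
    rw [map_coordChange_mul, hJ l fun _ _ hij => hl hij]
  have h_inf : (I ⊓ J).map (coordChange K n (g * l)) = I ⊓ J.map (coordChange K n g) := by
    rw [map_inf_of_bijective (coordChange_bijective _), h_fix_I, h_map_J]
  have h_mul : (I * J).map (coordChange K n (g * l)) = I * J.map (coordChange K n g) := by
    rw [Ideal.map_mul, h_fix_I, h_map_J]
  rw [← h_inf, ← h_mul, hilb_map_coordChange, hilb_map_coordChange]
  exact ⟨rfl, rfl⟩

end CoordChange

/-- **Remark 3.6** (Caviglia–Murai): let `I ⊆ S` be a Borel-fixed ideal and `J ⊆ S` a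
homogeneous ideal fixed by every lower triangular invertible change of coordinates.  For
a general change of coordinates `g ∈ GL_n(K)`, `H(I ∩ g(J), d) = H(I ∩ J, d)` and
`H(I·g(J), d) = H(I·J, d)` for all `d ≥ 0`. -/
theorem hilb_general_eq_of_borel_fixed [Infinite K]
    (I J : Ideal (PS K n)) (hI : IsBorelFixed K n I) (hJhom : IsHomog K n J)
    (hJ : ∀ h : GL (Fin n) K,
      (∀ i j : Fin n, i < j → (h : Matrix (Fin n) (Fin n) K) i j = 0) →
        Ideal.map (coordChange K n h) J = J) :
    generally K n (fun g => ∀ d : ℕ,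
      hilb K n (I ⊓ Ideal.map (coordChange K n g) J) d = hilb K n (I ⊓ J) d ∧
      hilb K n (I * Ideal.map (coordChange K n g) J) d = hilb K n (I * J) d) :=
  ⟨trailingMinorProd (Matrix.mvPolynomialX (Fin n) (Fin n) K),
    trailingMinorProd_mvPolynomialX_ne_zero, fun g hg d =>
      hilb_general_eq_of_borel_fixed_general hI hJ
        (eval_trailingMinorProd_mvPolynomialX (g : Matrix (Fin n) (Fin n) K) ▸ hg) d⟩

end
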